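/- Let a ≥ 2 be an integer and let X ⊆ [0,1] be an infinite closed minimal T_a-invariant set. Let I ⊆ ℝ be an open interval with I ∩ X ≠ ∅ and let f : I → ℝ be a C¹ embedding (a C¹ map with nowhere vanishing derivative that is a homeomorphism onto its image). If f(X ∩ I) ⊆ X, then log_a|f'(x)| ∈ ℚ for every x ∈ X ∩ I. -/

import Mathlib

/-!
For `x ∈ X` let `F(x) ⊆ ℝ/ℤ` be the set of limits of `{u - v}_a = -log_a |u - v|` along distinct
`u, v ∈ X` tending to `x` (`clusterScales`). A map with strict derivative `φ' ≠ 0` at `x` that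
preserves `X` near `x` multiplies small differences by about `φ'`, so
`F(x) + {φ'}_a ⊆ F(φ x)` (`add_fracPart_mem_clusterScales`). As `{a}_a = 0`, this gives
`F(x) ⊆ F(T_a x)`; with upper semicontinuity of `F` and minimality, `F` is constant on `X`
(`clusterScales_subset`). Applied to `f` it then gives `F + {f'(x)}_a ⊆ F`. Since `F` is closed and
nonempty, an irrational `log_a |f'(x)|` forces `F = ℝ/ℤ`, by density of the orbits of an irrational
rotation.

It remains to see that `F ≠ ℝ/ℤ` (`clusterScales_ne_univ`). Otherwise, multiplying small
differences by powers of `a`, one finds that `X - X` is the whole circle. So every `c` with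
`a ^ p c = c` is a difference of two points of `X`, and by minimality, for a fixed `z ∈ X`, one
of `z + c, z + a c, …, z + a ^ (p - 1) c` lies in `X` (`exists_translate_mem`). The `a ^ p - 1`
points of period `p` have spacing greater than `a ^ (-p)`, so `X` meets at least `(a ^ p - 1) / p`
of the intervals `[j a ^ (-p), (j + 1) a ^ (-p))` (`le_mul_ncard_words`). But `0 ∉ X`, so for some
`l` the word of `l` zeros does not occur in `X`, and for `p = l m` at most `(a ^ l - 1) ^ m` of these
intervals meet `X` (`exists_ncard_words_le`); this is a contradiction for large `m`.
-/

open Filter Topology Set MeasureTheory ENNReal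

/-- `T_a x = a x mod 1` on `[0,1]`. -/
noncomputable def Ta (a : ℕ) (x : ℝ) : ℝ := Int.fract (a * x)

/-- `T_a` on the circle `ℝ/ℤ`. -/
noncomputable def TaC (a : ℕ) (x : AddCircle (1:ℝ)) : AddCircle (1:ℝ) := a • x

/-- the `a`-adic fractional part `{s}_a = -log_a |s| mod 1`, as an element of `ℝ/ℤ`. -/
noncomputable def fracPart (a : ℕ) (s : ℝ) : AddCircle (1:ℝ) :=
  ((-Real.logb a |s| : ℝ) : AddCircle (1:ℝ))

/-- the `a`-adic local difference set `F_{a,X}(x)` of `X ⊆ ℝ` at `x`. -/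
def localDiffSet (a : ℕ) (X : Set ℝ) (x : ℝ) : Set (AddCircle (1:ℝ)) :=
  { t | ∃ u v : ℕ → ℝ,
      (∀ n, u n ∈ X) ∧ (∀ n, v n ∈ X) ∧ (∀ n, u n ≠ v n) ∧
      Tendsto u atTop (nhds x) ∧ Tendsto v atTop (nhds x) ∧
      Tendsto (fun n => fracPart a (u n - v n)) atTop (nhds t) }

/-- `F_{a,X}(X) = ⋃_{x ∈ X} F_{a,X}(x)`. -/
def localDiffSetTotal (a : ℕ) (X : Set ℝ) : Set (AddCircle (1:ℝ)) :=
  ⋃ x ∈ X, localDiffSet a X x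

/-- the `a`-adic local difference set of `X ⊆ ℝ/ℤ` at `x ∈ ℝ/ℤ`, defined via lifts:
the difference `u n - v n` is lifted to a real number `d n` tending to `0`. -/
def localDiffSetC (a : ℕ) (X : Set (AddCircle (1:ℝ))) (x : AddCircle (1:ℝ)) :
    Set (AddCircle (1:ℝ)) :=
  { t | ∃ (u v : ℕ → AddCircle (1:ℝ)) (d : ℕ → ℝ),
      (∀ n, u n ∈ X) ∧ (∀ n, v n ∈ X) ∧ (∀ n, u n ≠ v n) ∧ (∀ n, d n ≠ 0) ∧
      (∀ n, ((d n : ℝ) : AddCircle (1:ℝ)) = u n - v n) ∧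
      Tendsto u atTop (nhds x) ∧ Tendsto v atTop (nhds x) ∧
      Tendsto d atTop (nhds 0) ∧
      Tendsto (fun n => fracPart a (d n)) atTop (nhds t) }

/-- `F_{a,X}(X)` for `X ⊆ ℝ/ℤ`. -/
def localDiffSetTotalC (a : ℕ) (X : Set (AddCircle (1:ℝ))) : Set (AddCircle (1:ℝ)) :=
  ⋃ x ∈ X, localDiffSetC a X x

/-- a point whose forward orbit `{T_a^n x : n ≥ 1}` is dense in `X`. -/
noncomputable def IsTransitivePoint (a : ℕ) (X : Set ℝ) (x : ℝ) : Prop :=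
  X ⊆ closure {y | ∃ n : ℕ, 1 ≤ n ∧ (Ta a)^[n] x = y}

/-- a `C²`-diffeomorphism of `ℝ`. -/
def IsC2Diffeo (f : ℝ → ℝ) : Prop :=
  ContDiff ℝ 2 f ∧ Function.Bijective f ∧ ∀ x, deriv f x ≠ 0

/-- a `C¹`-diffeomorphism of `ℝ`. -/
def IsC1Diffeo (f : ℝ → ℝ) : Prop :=
  ContDiff ℝ 1 f ∧ Function.Bijective f ∧ ∀ x, deriv f x ≠ 0

/-- piecewise curved: `f` is `C¹` and `f'` is strictly monotone near every point outside
a discrete set. -/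
def PiecewiseCurved (f : ℝ → ℝ) : Prop :=
  ContDiff ℝ 1 f ∧ ∃ E : Set ℝ, DiscreteTopology E ∧
    ∀ x : ℝ, x ∉ E → ∃ U ∈ nhds x, StrictMonoOn (deriv f) U ∨ StrictAntiOn (deriv f) U

/-- `X` is self-restricted: `X - X ≠ [0,1] mod 1`. -/
def SelfRestricted (X : Set ℝ) : Prop :=
  {t : AddCircle (1:ℝ) | ∃ x ∈ X, ∃ y ∈ X, ((x - y : ℝ) : AddCircle (1:ℝ)) = t} ≠ Set.univ

/-- the covering number `N(X,r)`: minimal number of `r`-balls needed to cover `X`. -/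
noncomputable def coveringNumber (r : ℝ) (X : Set ℝ) : ℝ≥0∞ :=
  ⨅ (s : Finset ℝ) (_ : X ⊆ ⋃ c ∈ s, Metric.ball c r), (s.card : ℝ≥0∞)

/-- upper box (Minkowski) dimension. -/
noncomputable def upperBoxDim (X : Set ℝ) : ℝ≥0∞ :=
  Filter.limsup
    (fun r : ℝ =>
      if coveringNumber r X = ⊤ then ⊤
      else ENNReal.ofReal (Real.log (coveringNumber r X).toReal / Real.log (1 / r)))
    (nhdsWithin 0 (Set.Ioi (0:ℝ)))

/-- a probability measure has dimension `t`: it gives mass `< 1` to every Borel set of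
Hausdorff dimension `< t`, and is supported on a Borel set of Hausdorff dimension `t`. -/
def HasDimension (μ : Measure ℝ) (t : ℝ≥0∞) : Prop :=
  (∀ E : Set ℝ, MeasurableSet E → dimH E < t → μ E < 1) ∧
  ∃ S : Set ℝ, MeasurableSet S ∧ dimH S = t ∧ μ Sᶜ = 0

/-- a piecewise `C²`-diffeomorphism of `ℝ` (relative to `X`): a finite partition of `ℝ` into
intervals, on each of which `f` restricts to a `C²`-diffeomorphism onto its image (except
possibly at the endpoints, which lie outside `X`). -/
def IsPiecewiseC2Diffeo (f : ℝ → ℝ) (X : Set ℝ) : Prop :=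
  ∃ (N : ℕ) (I : Fin N → Set ℝ),
    (∀ i, (I i).OrdConnected) ∧
    (⋃ i, I i) = Set.univ ∧
    Pairwise (Function.onFun Disjoint I) ∧
    (∀ i, ContinuousOn f (I i)) ∧
    (∀ i, Set.InjOn f (I i)) ∧
    (∀ i, ContDiffOn ℝ 2 f (interior (I i))) ∧
    (∀ i, ∀ x ∈ interior (I i), deriv f x ≠ 0) ∧
    (∀ i, frontier (I i) ∩ X = ∅)
/-! ### Local difference sets and maps preserving `X` -/

/-- Pairs of distinct points of `X` converging to `(x, x)`. -/
def distinctPairs (X : Set ℝ) (x : ℝ) : Filter (ℝ × ℝ) :=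
  𝓝 (x, x) ⊓ 𝓟 X.offDiag

/-- The local difference set of `X` at `x`, in cluster point form: limits of `{u - v}_a`
as `u ≠ v` in `X` tend to `x`. -/
def clusterScales (a : ℕ) (X : Set ℝ) (x : ℝ) : Set (AddCircle (1:ℝ)) :=
  {t | MapClusterPt t (distinctPairs X x) fun p => fracPart a (p.1 - p.2)}

theorem isClosed_clusterScales (a : ℕ) (X : Set ℝ) (x : ℝ) :
    IsClosed (clusterScales a X x) :=
  isClosed_setOfPred_clusterPt

theorem slope_tendsto {X : Set ℝ} {x φ' : ℝ} {φ : ℝ → ℝ} (h : HasStrictDerivAt φ φ' x) :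
    Tendsto (fun p : ℝ × ℝ => (φ p.1 - φ p.2) / (p.1 - p.2)) (distinctPairs X x) (𝓝 φ') := by
  have h1 := h.isLittleO
  have h2 := (h1.mono (inf_le_left : distinctPairs X x ≤ _)).tendsto_div_nhds_zero
  have h3 := h2.add_const φ'
  rw [zero_add] at h3
  refine h3.congr' ?_
  have : ∀ᶠ p in distinctPairs X x, p ∈ X.offDiag := mem_inf_of_right (mem_principal_self _)
  filter_upwards [this] with p hp
  have : p.1 - p.2 ≠ 0 := sub_ne_zero.2 hp.2.2
  simp only [ContinuousLinearMap.toSpanSingleton_apply, smul_eq_mul]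
  field_simp
  ring

/-- A local map with nonzero strict derivative that preserves `X` translates local difference
sets by the `a`-adic fractional part of its derivative. -/
theorem add_fracPart_mem_clusterScales {a : ℕ} {X : Set ℝ} {x φ' : ℝ} {φ : ℝ → ℝ}
    (h : HasStrictDerivAt φ φ' x) (h0 : φ' ≠ 0) (hX : ∀ᶠ u in 𝓝 x, u ∈ X → φ u ∈ X)
    {t : AddCircle (1:ℝ)} (ht : t ∈ clusterScales a X x) :
    t + fracPart a φ' ∈ clusterScales a X (φ x) := by
  obtain ⟨U, hU, hUt⟩ := mapClusterPt_iff_ultrafilter.1 ht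
  have hs := (slope_tendsto (X := X) h).mono_left hU
  have hoff : ∀ᶠ p in (U : Filter (ℝ × ℝ)), p ∈ X.offDiag :=
    hU (mem_inf_of_right (mem_principal_self _))
  have hnhds : (U : Filter (ℝ × ℝ)) ≤ 𝓝 (x, x) := hU.trans inf_le_left
  have hne : ∀ᶠ p in (U : Filter (ℝ × ℝ)), φ p.1 ≠ φ p.2 := by
    filter_upwards [hs.eventually_ne h0] with p hp he
    exact hp (by simp [he])
  have hfst : Tendsto Prod.fst (U : Filter (ℝ × ℝ)) (𝓝 x) :=
    (continuous_fst.tendsto (x, x)).mono_left hnhds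
  have hsnd : Tendsto Prod.snd (U : Filter (ℝ × ℝ)) (𝓝 x) :=
    (continuous_snd.tendsto (x, x)).mono_left hnhds
  have hc := h.hasDerivAt.continuousAt.tendsto
  refine mapClusterPt_iff_ultrafilter.2 ⟨U.map (Prod.map φ φ), ?_, ?_⟩
  · refine le_inf ?_ (le_principal_iff.2 ?_)
    · rw [nhds_prod_eq]
      exact (hc.comp hfst).prodMk (hc.comp hsnd)
    · change ∀ᶠ p in (U : Filter (ℝ × ℝ)), Prod.map φ φ p ∈ X.offDiag
      filter_upwards [hoff, hne, hfst.eventually hX, hsnd.eventually hX] with p hp hp' h1 h2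
      exact ⟨h1 hp.1, h2 hp.2.1, hp'⟩
  · rw [Ultrafilter.coe_map, tendsto_map'_iff]
    have hlog : Tendsto (fun p : ℝ × ℝ => fracPart a ((φ p.1 - φ p.2) / (p.1 - p.2))) U
        (𝓝 (fracPart a φ')) := by
      have hl : Tendsto (fun p : ℝ × ℝ => Real.logb a |(φ p.1 - φ p.2) / (p.1 - p.2)|) U
          (𝓝 (Real.logb a |φ'|)) := by
        simp only [Real.logb]
        exact (hs.abs.log (abs_ne_zero.2 h0)).div_const _
      exact ((AddCircle.continuous_mk' (1:ℝ)).tendsto _).comp hl.neg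
    refine (hUt.add hlog).congr' ?_
    filter_upwards [hoff, hne] with p hp hp'
    have e1 : |p.1 - p.2| ≠ 0 := abs_ne_zero.2 (sub_ne_zero.2 hp.2.2)
    have e2 : |φ p.1 - φ p.2| ≠ 0 := abs_ne_zero.2 (sub_ne_zero.2 hp')
    simp only [fracPart, Function.comp, Prod.map]
    rw [← AddCircle.coe_add, abs_div, Real.logb_div e2 e1]
    congr 1
    ring

/-- Upper semicontinuity of the local difference set. -/
theorem mem_clusterScales_of_frequently {a : ℕ} {X : Set ℝ} {x : ℝ} {t : AddCircle (1:ℝ)}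
    (h : ∃ᶠ y in 𝓝 x, t ∈ clusterScales a X y) : t ∈ clusterScales a X x := by
  refine mapClusterPt_iff_frequently.2 fun s hs => ?_
  rw [distinctPairs, frequently_inf_principal, frequently_nhds_iff]
  intro W hxW hW
  have hW' : ∀ᶠ y in 𝓝 x, (y, y) ∈ W :=
    (continuous_id.prodMk continuous_id).continuousAt.eventually_mem (hW.mem_nhds hxW)
  obtain ⟨y, hy, hyW⟩ := (h.and_eventually hW').exists
  have := mapClusterPt_iff_frequently.1 hy s hs
  rw [distinctPairs, frequently_inf_principal, frequently_nhds_iff] at this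
  exact this _ hyW hW

theorem clusterScales_nonempty {a : ℕ} {X : Set ℝ} {x : ℝ} (h : AccPt x (𝓟 X)) (hx : x ∈ X) :
    (clusterScales a X x).Nonempty := by
  have : (distinctPairs X x).NeBot := by
    rw [distinctPairs, ← frequently_mem_iff_neBot, frequently_nhds_iff]
    intro W hxW hW
    have hW' : ∀ᶠ y in 𝓝 x, (y, x) ∈ W :=
      (continuous_id.prodMk continuous_const).continuousAt.eventually_mem (hW.mem_nhds hxW)
    obtain ⟨y, hy, hyW⟩ := ((accPt_iff_frequently.1 h).and_eventually hW').exists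
    exact ⟨(y, x), hyW, hy.2, hx, hy.1⟩
  exact exists_clusterPt_of_compactSpace _

/-! ### The map `T_a` -/

theorem coe_Ta (a : ℕ) (x : ℝ) : ((Ta a x : ℝ) : AddCircle (1:ℝ)) = a • (x : AddCircle (1:ℝ)) := by
  have h : ((⌊(a:ℝ) * x⌋ : ℝ) : AddCircle (1:ℝ)) = 0 := (AddCircle.coe_eq_zero_iff (1:ℝ)).2 ⟨⌊(a:ℝ) * x⌋, by simp⟩
  rw [Ta, Int.fract, AddCircle.coe_sub, h, sub_zero, ← nsmul_eq_mul, AddCircle.coe_nsmul]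

theorem coe_Ta_iterate (a n : ℕ) (x : ℝ) :
    (((Ta a)^[n] x : ℝ) : AddCircle (1:ℝ)) = a ^ n • (x : AddCircle (1:ℝ)) := by
  induction n with
  | zero => simp
  | succ n ih => rw [Function.iterate_succ_apply', coe_Ta, ih, pow_succ', mul_smul]

theorem hasStrictDerivAt_Ta {a : ℕ} {x : ℝ} (hx : Ta a x ≠ 0) :
    HasStrictDerivAt (Ta a) a x := by
  have h1 : HasStrictDerivAt (fun y : ℝ => (a:ℝ) * y - ⌊(a:ℝ) * x⌋) a x := by
    have := ((hasStrictDerivAt_id x).const_mul (a:ℝ)).sub_const (⌊(a:ℝ) * x⌋ : ℝ)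
    rw [mul_one] at this
    exact this
  refine h1.congr_of_eventuallyEq ?_
  have hlt : (⌊(a:ℝ) * x⌋ : ℝ) < a * x :=
    lt_of_le_of_ne (Int.floor_le _) fun h => hx (by rw [Ta, Int.fract, h, sub_self])
  have hc : ContinuousAt (fun y : ℝ => (a:ℝ) * y) x := by fun_prop
  filter_upwards [hc.eventually_mem (Ioo_mem_nhds hlt (Int.lt_floor_add_one _))] with y hy
  have : ⌊(a:ℝ) * y⌋ = ⌊(a:ℝ) * x⌋ := Int.floor_eq_iff.2 ⟨hy.1.le, hy.2⟩
  rw [Ta, Int.fract, this]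

/-! ### Minimal sets -/

section Minimal

variable {a : ℕ} {X : Set ℝ}

/-- The fixed point `0` does not lie in an infinite minimal set. -/
theorem zero_notMem (hXinf : X.Infinite) (hXmin : ∀ x ∈ X, IsTransitivePoint a X x) :
    (0:ℝ) ∉ X := by
  intro h
  have h1 : X ⊆ {0} := by
    refine (hXmin 0 h).trans (closure_minimal ?_ isClosed_singleton)
    rintro y ⟨n, -, rfl⟩
    exact Function.iterate_fixed (by simp [Ta]) n
  exact hXinf ((finite_singleton _).subset h1)

theorem clusterScales_subset (ha : 2 ≤ a) (hXinf : X.Infinite) (hXinv : MapsTo (Ta a) X X)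
    (hXmin : ∀ x ∈ X, IsTransitivePoint a X x) {x y : ℝ} (hx : x ∈ X) (hy : y ∈ X) :
    clusterScales a X x ⊆ clusterScales a X y := by
  intro t ht
  have h0 := zero_notMem hXinf hXmin
  have ha1 : (1:ℝ) < a := by exact_mod_cast ha
  -- `{a}_a = 0`, so passing from `x` to `T_a x` does not translate the local difference set
  have hfa : fracPart a (a:ℝ) = 0 := by
    rw [fracPart, abs_of_pos (by linarith), Real.logb_self_eq_one ha1]
    exact (AddCircle.coe_eq_zero_iff (1:ℝ)).2 ⟨-1, by simp⟩
  have hit : ∀ n : ℕ, (Ta a)^[n] x ∈ X ∧ t ∈ clusterScales a X ((Ta a)^[n] x) := by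
    intro n
    induction n with
    | zero => exact ⟨hx, ht⟩
    | succ n ih =>
      rw [Function.iterate_succ_apply']
      have hm := hXinv ih.1
      refine ⟨hm, ?_⟩
      have hd := hasStrictDerivAt_Ta (a := a) fun h => h0 (h ▸ hm)
      have := add_fracPart_mem_clusterScales hd (by linarith)
        (Eventually.of_forall fun u hu => hXinv hu) ih.2
      rwa [hfa, add_zero] at this
  refine mem_clusterScales_of_frequently ?_
  refine (mem_closure_iff_frequently.1 (hXmin x hx hy)).mono ?_
  rintro _ ⟨n, -, rfl⟩
  exact (hit n).2

theorem smul_pow_mem (hXinv : MapsTo (Ta a) X X) {c : AddCircle (1:ℝ)}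
    (hc : c ∈ ((↑) '' X : Set (AddCircle (1:ℝ)))) (n : ℕ) :
    a ^ n • c ∈ ((↑) '' X : Set (AddCircle (1:ℝ))) := by
  obtain ⟨x, hx, rfl⟩ := hc
  exact ⟨_, hXinv.iterate n hx, coe_Ta_iterate a n x⟩

/-- If the local difference set at one point is the whole circle, then every point of the circle
is a difference of two points of `X`: blow up small differences by powers of `a`. -/
theorem exists_add_mem_of_clusterScales_eq_univ (ha : 2 ≤ a) (hXc : IsCompact X)
    (hXinv : MapsTo (Ta a) X X) {x : ℝ} (hF : clusterScales a X x = univ)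
    (c : AddCircle (1:ℝ)) : ∃ w ∈ X, (w : AddCircle (1:ℝ)) + c ∈ ((↑) '' X : Set (AddCircle (1:ℝ))) := by
  set K : Set (AddCircle (1:ℝ)) := (↑) '' X with hK
  have hKc : IsCompact K := hXc.image (AddCircle.continuous_mk' (1:ℝ))
  set D : Set (AddCircle (1:ℝ)) := (fun p : AddCircle (1:ℝ) × AddCircle (1:ℝ) => p.1 - p.2) '' (K ×ˢ K)
    with hD
  have hDc : IsClosed D := ((hKc.prod hKc).image (by fun_prop)).isClosed
  have ha1 : (1:ℝ) < a := by exact_mod_cast ha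
  suffices hs : ∀ s : ℝ, 0 < s → (s : AddCircle (1:ℝ)) ∈ D by
    obtain ⟨r, rfl⟩ := QuotientAddGroup.mk_surjective c
    have hr : ((Int.fract r + 1 : ℝ) : AddCircle (1:ℝ)) = (r : AddCircle (1:ℝ)) := by
      rw [← sub_eq_zero, ← AddCircle.coe_sub]
      refine (AddCircle.coe_eq_zero_iff (1:ℝ)).2 ⟨1 - ⌊r⌋, ?_⟩
      rw [Int.fract]; simp only [zsmul_eq_mul, mul_one]; push_cast; ring
    obtain ⟨⟨p, q⟩, ⟨hp, w, hw, hwq⟩, hpq⟩ := hs (Int.fract r + 1) (by linarith [Int.fract_nonneg r])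
    refine ⟨w, hw, ?_⟩
    rw [hr] at hpq
    simp only at hwq hpq hp
    change (w : AddCircle (1:ℝ)) + (r : AddCircle (1:ℝ)) ∈ K
    rw [← hpq, hwq, add_sub_cancel]
    exact hp
  intro s hs
  have hcl : IsClosed {r : ℝ | (r : AddCircle (1:ℝ)) ∈ D} :=
    hDc.preimage (AddCircle.continuous_mk' (1:ℝ))
  change s ∈ {r : ℝ | (r : AddCircle (1:ℝ)) ∈ D}
  rw [← hcl.closure_eq, mem_closure_iff_nhds]
  intro V hV
  have hV' : V ∩ Ioi (s/2) ∈ 𝓝 s := inter_mem hV (Ioi_mem_nhds (by linarith))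
  -- real representatives `r` of scales near `{s}_a`, for which `a ^ (-r)` is near `s`
  have hpow : (fun r : ℝ => (a:ℝ) ^ (-r)) ⁻¹' (V ∩ Ioi (s/2)) ∈ 𝓝 (-Real.logb a s) := by
    have hcont : ContinuousAt (fun r : ℝ => (a:ℝ) ^ (-r)) (-Real.logb a s) := by
      refine ContinuousAt.rpow continuousAt_const continuousAt_neg (Or.inl (by positivity))
    refine hcont ?_
    simpa [Real.rpow_logb (by linarith : (0:ℝ) < a) ha1.ne' hs] using hV'
  have himg := QuotientAddGroup.isOpenMap_coe (N := AddSubgroup.zmultiples (1:ℝ)) |>.image_mem_nhds hpow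
  have hmem : fracPart a s ∈ clusterScales a X x := hF ▸ mem_univ _
  rw [fracPart, abs_of_pos hs] at hmem
  have hfr := mapClusterPt_iff_frequently.1 hmem _ himg
  have hsmall : ∀ᶠ p in distinctPairs X x, |p.1 - p.2| < s / 2 := by
    refine Filter.Eventually.filter_mono inf_le_left ?_
    have hc : ContinuousAt (fun p : ℝ × ℝ => |p.1 - p.2|) (x, x) := by fun_prop
    exact hc.eventually_lt_const (by simpa using hs)
  have hoff : ∀ᶠ p in distinctPairs X x, p ∈ X.offDiag := mem_inf_of_right (mem_principal_self _)
  obtain ⟨⟨u, v⟩, ⟨⟨r, hr, hrp⟩, hlt⟩, hu, hv, huv⟩ :=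
    ((hfr.and_eventually hsmall).and_eventually hoff).exists
  simp only at hlt hu hv huv hrp
  have hd : 0 < |u - v| := abs_pos.2 (sub_ne_zero.2 huv)
  have hrp' : ((r - -Real.logb a |u - v| : ℝ) : AddCircle (1:ℝ)) = 0 := by
    rw [AddCircle.coe_sub, sub_eq_zero]; exact hrp
  obtain ⟨k, hk⟩ := (AddCircle.coe_eq_zero_iff (1:ℝ)).1 hrp'
  have hrk : (a:ℝ) ^ (-r) = (a:ℝ) ^ (-k) * |u - v| := by
    have : -r = ((-k : ℤ) : ℝ) + Real.logb a |u - v| := by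
      push_cast; rw [zsmul_eq_mul, mul_one] at hk; linarith
    rw [this, Real.rpow_add (by linarith), Real.rpow_intCast,
      Real.rpow_logb (by linarith) ha1.ne' hd]
  obtain ⟨hrV, hrs⟩ := hr
  simp only [hrk] at hrV
  simp only [mem_Ioi, hrk] at hrs
  have hk0 : 0 ≤ -k := by
    by_contra hneg
    have : (a:ℝ) ^ (-k) ≤ 1 := zpow_le_one_of_nonpos₀ ha1.le (by omega)
    nlinarith
  obtain ⟨n, hn⟩ := Int.eq_ofNat_of_zero_le hk0
  rw [hn] at hrV
  refine ⟨_, hrV, ?_⟩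
  have key : ∀ u ∈ X, ∀ v ∈ X, ((((a:ℝ) ^ ((n:ℕ):ℤ)) * (u - v) : ℝ) : AddCircle (1:ℝ)) ∈ D := by
    intro u hu v hv
    refine ⟨(a ^ n • (u : AddCircle (1:ℝ)), a ^ n • (v : AddCircle (1:ℝ))),
      ⟨smul_pow_mem hXinv ⟨u, hu, rfl⟩ n, smul_pow_mem hXinv ⟨v, hv, rfl⟩ n⟩, ?_⟩
    simp only [← AddCircle.coe_nsmul, ← AddCircle.coe_sub]
    congr 1
    simp [mul_sub]
  rcases abs_choice (u - v) with h | h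
  · rw [h]; exact key u hu v hv
  · rw [h, neg_sub]; exact key v hv u hu

/-- If `c` is `T_a`-periodic of period `p` and a difference of points of `X`, then every
`z ∈ X` has a translate by one of `c, a c, …, a^(p-1) c` in `X`, by minimality. -/
theorem exists_translate_mem (hXc : IsCompact X) (hXinv : MapsTo (Ta a) X X)
    (hXmin : ∀ x ∈ X, IsTransitivePoint a X x) {p : ℕ} (hp : 0 < p) {c : AddCircle (1:ℝ)}
    (hc : a ^ p • c = c) {w : ℝ} (hw : w ∈ X)
    (hwc : (w : AddCircle (1:ℝ)) + c ∈ ((↑) '' X : Set (AddCircle (1:ℝ)))) {z : ℝ} (hz : z ∈ X) :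
    ∃ r < p, (z : AddCircle (1:ℝ)) + a ^ r • c ∈ ((↑) '' X : Set (AddCircle (1:ℝ))) := by
  have hcn : ∀ n : ℕ, a ^ n • c = a ^ (n % p) • c := by
    intro n
    have hm : ∀ m : ℕ, a ^ (p * m) • c = c := by
      intro m
      induction m with
      | zero => simp
      | succ m ih => rw [Nat.mul_succ, pow_add, mul_smul, hc, ih]
    conv_lhs => rw [← Nat.mod_add_div n p, pow_add, mul_smul, hm]
  -- one residue class of times modulo `p` suffices to approximate `z`
  have hcl : z ∈ closure (⋃ r : Fin p, {y | ∃ n : ℕ, n % p = r ∧ (Ta a)^[n] w = y}) := by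
    refine closure_mono ?_ (hXmin w hw hz)
    rintro y ⟨n, -, rfl⟩
    exact mem_iUnion.2 ⟨⟨n % p, Nat.mod_lt _ hp⟩, n, rfl, rfl⟩
  rw [closure_iUnion_of_finite] at hcl
  obtain ⟨r, hr⟩ := mem_iUnion.1 hcl
  refine ⟨r, r.2, ?_⟩
  have hKc : IsClosed ((↑) '' X : Set (AddCircle (1:ℝ))) :=
    (hXc.image (AddCircle.continuous_mk' (1:ℝ))).isClosed
  have hcont : Continuous fun y : ℝ => (y : AddCircle (1:ℝ)) + a ^ (r:ℕ) • c :=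
    (AddCircle.continuous_mk' (1:ℝ)).add continuous_const
  refine closure_minimal (t := (fun y : ℝ => (y : AddCircle (1:ℝ)) + a ^ (r:ℕ) • c) ⁻¹' ((↑) '' X : Set (AddCircle (1:ℝ))))
    ?_ (hKc.preimage hcont) hr
  rintro y ⟨n, hn, rfl⟩
  change (((Ta a)^[n] w : ℝ) : AddCircle (1:ℝ)) + a ^ (r:ℕ) • c ∈ ((↑) '' X : Set (AddCircle (1:ℝ)))
  rw [coe_Ta_iterate, ← hn, ← hcn n, ← smul_add]
  exact smul_pow_mem hXinv hwc n

end Minimal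

/-! ### Counting words -/

/-- The length-`p` words occurring in `X`: the word of the first `p` base-`a` digits of `y ∈ X` is
encoded as the integer `⌊a ^ p y⌋`. -/
noncomputable def words (a : ℕ) (X : Set ℝ) (p : ℕ) : Set ℤ :=
  (fun y : ℝ => ⌊(a:ℝ) ^ p * y⌋) '' X

theorem words_subset {a : ℕ} (ha : 2 ≤ a) {X : Set ℝ} (hX : X ⊆ Ico 0 1) (p : ℕ) :
    words a X p ⊆ Finset.Ico (0:ℤ) (a ^ p) := by
  rintro _ ⟨y, hy, rfl⟩
  have hp : (0:ℝ) < (a:ℝ) ^ p := by positivity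
  have := hX hy
  simp only [Finset.coe_Ico, mem_Ico, Int.floor_nonneg, Int.floor_lt]
  refine ⟨mul_nonneg hp.le this.1, ?_⟩
  push_cast
  nlinarith [this.2]

theorem ncard_words_add_le {a : ℕ} (ha : 2 ≤ a) {X : Set ℝ} (hX : X ⊆ Ico 0 1)
    (hXinv : MapsTo (Ta a) X X) (p q : ℕ) :
    (words a X (p + q)).ncard ≤ (words a X p).ncard * (words a X q).ncard := by
  have hfin : ∀ p, (words a X p).Finite := fun p =>
    (Finset.finite_toSet _).subset (words_subset ha hX p)
  rw [← ncard_prod]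
  have hsub : words a X (p + q) ⊆
      (fun w : ℤ × ℤ => a ^ q * w.1 + w.2) '' (words a X p ×ˢ words a X q) := by
    rintro _ ⟨y, hy, rfl⟩
    refine ⟨(⌊(a:ℝ) ^ p * y⌋, ⌊(a:ℝ) ^ q * (Ta a)^[p] y⌋),
      ⟨⟨y, hy, rfl⟩, ⟨_, hXinv.iterate p hy, rfl⟩⟩, ?_⟩
    have hT : (Ta a)^[p] y = (a:ℝ) ^ p * y - ⌊(a:ℝ) ^ p * y⌋ := by
      have h1 : (Ta a)^[p] y ∈ Ico (0:ℝ) 1 := hX (hXinv.iterate p hy)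
      have h2 := coe_Ta_iterate a p y
      rw [← AddCircle.coe_nsmul, ← sub_eq_zero, ← AddCircle.coe_sub,
        AddCircle.coe_eq_zero_iff] at h2
      obtain ⟨n, hn⟩ := h2
      simp only [mul_one, nsmul_eq_mul, zsmul_eq_mul, Nat.cast_pow] at hn
      have : ⌊(a:ℝ) ^ p * y⌋ = -n := Int.floor_eq_iff.2
        ⟨by push_cast; linarith [h1.1], by push_cast; linarith [h1.2]⟩
      rw [this]; push_cast; linarith
    have : (a:ℝ) ^ (p + q) * y
        = (a:ℝ) ^ q * (Ta a)^[p] y + ((a ^ q * ⌊(a:ℝ) ^ p * y⌋ : ℤ) : ℝ) := by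
      rw [hT]; push_cast; ring
    simp only [this, Int.floor_add_intCast]
    ring
  calc _ ≤ _ := ncard_le_ncard hsub (((hfin p).prod (hfin q)).image _)
    _ ≤ _ := ncard_image_le ((hfin p).prod (hfin q))

/-- A closed invariant set avoiding `0` misses a word `0…0`, so its word count grows at an
exponential rate strictly smaller than that of the full shift. -/
theorem exists_ncard_words_le {a : ℕ} (ha : 2 ≤ a) {X : Set ℝ} (hX : X ⊆ Ico 0 1)
    (hXcl : IsClosed X) (h0 : (0:ℝ) ∉ X) (hXinv : MapsTo (Ta a) X X) :
    ∃ l : ℕ, 0 < l ∧ ∀ m : ℕ, (words a X (l * m)).ncard ≤ (a ^ l - 1) ^ m := by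
  obtain ⟨δ, hδ, hball⟩ := Metric.isOpen_iff.1 hXcl.isOpen_compl 0 h0
  have ha1 : (1:ℝ) < a := by exact_mod_cast ha
  obtain ⟨l, hl⟩ := pow_unbounded_of_one_lt (max 1 δ⁻¹) ha1
  have hl0 : 0 < l := by
    rcases Nat.eq_zero_or_pos l with rfl | h
    · simp at hl
    · exact h
  refine ⟨l, hl0, fun m => ?_⟩
  induction m with
  | zero =>
    have := ncard_le_ncard (words_subset ha hX 0) (Finset.finite_toSet _)
    rw [ncard_coe_finset] at this
    simpa using this
  | succ m ih =>
    have h1 : (words a X l).ncard ≤ a ^ l - 1 := by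
      have hsub : words a X l ⊆ Finset.Ico (1:ℤ) (a ^ l) := by
        rintro _ ⟨y, hy, rfl⟩
        have hy1 := words_subset ha hX l ⟨y, hy, rfl⟩
        simp only [Finset.coe_Ico, mem_Ico] at hy1 ⊢
        refine ⟨?_, hy1.2⟩
        rw [Int.le_floor, Int.cast_one]
        have hyδ : δ ≤ y := by
          by_contra hlt
          exact hball (by simpa [abs_of_nonneg (hX hy).1] using hlt) hy
        calc (1:ℝ) = δ⁻¹ * δ := by field_simp
          _ ≤ (a:ℝ) ^ l * y := by
            gcongr
            exact ((le_max_right _ _).trans_lt hl).le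
      have := ncard_le_ncard hsub (Finset.finite_toSet _)
      rw [ncard_coe_finset, Int.card_Ico] at this
      have e : ((a:ℤ) ^ l - 1).toNat = a ^ l - 1 := by
        have : ((a:ℤ) ^ l - 1) = ((a ^ l - 1 : ℕ) : ℤ) := by
          rw [Nat.cast_sub (Nat.one_le_pow _ _ (by omega))]; push_cast; ring
        rw [this, Int.toNat_natCast]
      omega
    rw [Nat.mul_succ, pow_succ]
    exact (ncard_words_add_le ha hX hXinv _ _).trans (Nat.mul_le_mul ih h1)

/-- If every point of the circle is a difference of points of `X`, then for all `p` the `a^p - 1`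
points of period `p` are recorded, up to a choice of one of `p` exponents, by words of
length `p`. -/
theorem le_mul_ncard_words {a : ℕ} (ha : 2 ≤ a) {X : Set ℝ} (hX : X ⊆ Ico 0 1)
    (hXc : IsCompact X) (hXinv : MapsTo (Ta a) X X)
    (hXmin : ∀ x ∈ X, IsTransitivePoint a X x) {z : ℝ} (hz : z ∈ X)
    (hD : ∀ c : AddCircle (1:ℝ), ∃ w ∈ X,
      (w : AddCircle (1:ℝ)) + c ∈ ((↑) '' X : Set (AddCircle (1:ℝ)))) {p : ℕ} (hp : 0 < p) :
    a ^ p - 1 ≤ p * (words a X p).ncard := by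
  obtain ⟨N, hN⟩ : ∃ N, a ^ p = N + 1 := ⟨a ^ p - 1, by have := Nat.one_le_pow p a (by omega); omega⟩
  have hN0 : 0 < N := by
    have := Nat.one_lt_pow hp.ne' (by omega : 1 < a); omega
  have hNR : (0:ℝ) < N := by exact_mod_cast hN0
  have hfin : (words a X p).Finite := (Finset.finite_toSet _).subset (words_subset ha hX p)
  have hch : ∀ j : Fin N, ∃ r : Fin p, ∃ y ∈ X, (y : AddCircle (1:ℝ)) =
      ((z + (a:ℝ) ^ (r:ℕ) * ((j : ℕ) / N : ℝ) : ℝ) : AddCircle (1:ℝ)) := by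
    intro j
    obtain ⟨w, hw, hwc⟩ := hD (((j : ℕ) / N : ℝ) : AddCircle (1:ℝ))
    have hc : a ^ p • ((((j : ℕ) / N : ℝ)) : AddCircle (1:ℝ)) =
        ((((j : ℕ) / N : ℝ)) : AddCircle (1:ℝ)) := by
      rw [hN, succ_nsmul, ← AddCircle.coe_nsmul, add_eq_right, AddCircle.coe_eq_zero_iff]
      refine ⟨(j : ℕ), ?_⟩
      simp; field_simp
    obtain ⟨r, hr, y, hy, hyr⟩ := exists_translate_mem hXc hXinv hXmin hp hc hw hwc hz
    refine ⟨⟨r, hr⟩, y, hy, ?_⟩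
    rw [hyr, AddCircle.coe_add, ← AddCircle.coe_nsmul]
    simp
  choose r y hy hyr using hch
  have hinj : Function.Injective fun j : Fin N =>
      ((r j, (⟨⌊(a:ℝ) ^ p * y j⌋, y j, hy j, rfl⟩ : words a X p)) : Fin p × words a X p) := by
    intro i j hij
    obtain ⟨h1, h2⟩ := Prod.mk.inj hij
    have h3 : ⌊(a:ℝ) ^ p * y i⌋ = ⌊(a:ℝ) ^ p * y j⌋ := congrArg Subtype.val h2
    have h4 := Int.abs_sub_lt_one_of_floor_eq_floor h3
    have hc : ((y i - y j - (a:ℝ) ^ (r i : ℕ) * ((i : ℕ) - (j : ℕ) : ℝ) / N : ℝ)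
        : AddCircle (1:ℝ)) = 0 := by
      have e : y i - y j - (a:ℝ) ^ (r i : ℕ) * ((i : ℕ) - (j : ℕ) : ℝ) / N =
        (y i - (z + (a:ℝ) ^ (r i : ℕ) * ((i : ℕ) / N : ℝ))) -
        (y j - (z + (a:ℝ) ^ (r j : ℕ) * ((j : ℕ) / N : ℝ))) := by rw [h1]; ring
      rw [e, AddCircle.coe_sub, AddCircle.coe_sub, AddCircle.coe_sub, hyr i, hyr j]
      simp
    obtain ⟨n, hn⟩ := (AddCircle.coe_eq_zero_iff (1:ℝ)).1 hc
    simp only [zsmul_eq_mul, mul_one] at hn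
    -- `N (y i - y j)` is an integer of absolute value less than `1`
    set M : ℤ := N * n + (a:ℤ) ^ (r i : ℕ) * ((i : ℕ) - (j : ℕ)) with hM
    have hMy : (M : ℝ) = N * (y i - y j) := by
      rw [hM]; push_cast; rw [hn]; field_simp; ring
    have haN : (a:ℝ) ^ p = N + 1 := by exact_mod_cast hN
    have hM1 : |(M : ℝ)| < 1 := by
      rw [hMy, abs_mul, abs_of_pos hNR]
      rw [← mul_sub, abs_mul, haN, abs_of_pos (by linarith)] at h4
      nlinarith [abs_nonneg (y i - y j)]
    have hM0 : M = 0 := Int.abs_lt_one_iff.1 (by exact_mod_cast hM1)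
    have hdvd : (N : ℤ) ∣ (a:ℤ) ^ (r i : ℕ) * ((i : ℕ) - (j : ℕ)) := ⟨-n, by linarith⟩
    have hcop : IsCoprime (N : ℤ) ((a:ℤ) ^ (r i : ℕ)) := by
      refine IsCoprime.pow_right ?_
      refine (IsCoprime.pow_right_iff hp).1 ⟨-1, 1, ?_⟩
      have : (a:ℤ) ^ p = N + 1 := by exact_mod_cast hN
      rw [this]; ring
    have h5 := hcop.dvd_of_dvd_mul_left hdvd
    have h6 : ((i : ℕ) : ℤ) - (j : ℕ) = 0 := by
      refine Int.eq_zero_of_abs_lt_dvd h5 ?_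
      have := i.2; have := j.2
      rw [abs_lt]; omega
    exact Fin.ext (by omega)
  have := hfin.to_subtype
  have hcard := Nat.card_le_card_of_injective _ hinj
  rw [Nat.card_prod, Nat.card_fin, Nat.card_fin, Nat.card_coe_set_eq] at hcard
  rw [hN]; simpa using hcard

theorem clusterScales_ne_univ {a : ℕ} (ha : 2 ≤ a) {X : Set ℝ} (hX : X ⊆ Ico 0 1)
    (hXc : IsCompact X) (h0 : (0:ℝ) ∉ X) (hXinv : MapsTo (Ta a) X X)
    (hXmin : ∀ x ∈ X, IsTransitivePoint a X x) {x : ℝ} (hx : x ∈ X) :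
    clusterScales a X x ≠ univ := by
  intro hF
  obtain ⟨l, hl, hw⟩ := exists_ncard_words_le ha hX hXc.isClosed h0 hXinv
  have hD := exists_add_mem_of_clusterScales_eq_univ ha hXc hXinv hF
  obtain ⟨B, hB⟩ : ∃ B, a ^ l = B + 2 := ⟨a ^ l - 2, by
    have := Nat.one_lt_pow hl.ne' (by omega : 1 < a); omega⟩
  have hb : ∀ m : ℕ, 0 < m → (B + 2) ^ m ≤ l * m * (B + 1) ^ m + 1 := by
    intro m hm
    have h1 := le_mul_ncard_words ha hX hXc hXinv hXmin hx hD (Nat.mul_pos hl hm)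
    have h2 := Nat.mul_le_mul_left (l * m) (hw m)
    rw [pow_mul, hB] at h1
    rw [hB, show B + 2 - 1 = B + 1 from rfl] at h2
    omega
  set ρ : ℝ := (B + 1) / (B + 2) with hρ
  have hρ0 : 0 ≤ ρ := by positivity
  have hρ1 : ρ < 1 := by rw [hρ, div_lt_one (by positivity)]; linarith
  have hlim : Tendsto (fun m : ℕ => (l:ℝ) * (m * ρ ^ m) + (1/2 : ℝ) ^ m) atTop (𝓝 (l * 0 + 0)) :=
    ((tendsto_self_mul_const_pow_of_lt_one hρ0 hρ1).const_mul _).add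
      (tendsto_pow_atTop_nhds_zero_of_lt_one (by norm_num) (by norm_num))
  obtain ⟨m, hm, hm0⟩ :=
    ((hlim.eventually_lt_const (by norm_num : (l:ℝ) * 0 + 0 < 1)).and (eventually_gt_atTop 0)).exists
  have h1 : ((B:ℝ) + 2) ^ m ≤ l * m * (B + 1) ^ m + 1 := by exact_mod_cast hb m hm0
  have h2 : (0:ℝ) < (B + 2) ^ m := by positivity
  have h3 : (1:ℝ) ≤ (1/2) ^ m * (B + 2) ^ m := by
    rw [← mul_pow]; exact one_le_pow₀ (by linarith [(Nat.cast_nonneg B : (0:ℝ) ≤ B)])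
  have h4 : ρ ^ m * (B + 2) ^ m = ((B:ℝ) + 1) ^ m := by
    rw [← mul_pow, hρ, div_mul_cancel₀ _ (by positivity)]
  have h5 := mul_lt_mul_of_pos_right hm h2
  have h6 : ((l:ℝ) * (m * ρ ^ m) + (1/2 : ℝ) ^ m) * (B + 2) ^ m
    = l * m * (B + 1) ^ m + (1/2) ^ m * (B + 2) ^ m := by rw [← h4]; ring
  linarith

/-- **Theorem 1.2(2), local version.** If `X ⊆ [0,1]` is an infinite closed minimal
`T_a`-invariant set, `I` an open interval meeting `X` and `f : I → ℝ` a `C¹` embedding with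
`f(X ∩ I) ⊆ X`, then `log_a |f'(x)| ∈ ℚ` for every `x ∈ X ∩ I`. -/
theorem C1_embedding_minimal_local_commensurable
    (a : ℕ) (ha : 2 ≤ a) (X : Set ℝ) (hXsub : X ⊆ Set.Icc 0 1)
    (hXcl : IsClosed X) (hXinf : X.Infinite)
    (hXinv : Set.MapsTo (Ta a) X X)
    (hXmin : ∀ x ∈ X, IsTransitivePoint a X x)
    (I : Set ℝ) (hIopen : IsOpen I) (hIconn : I.OrdConnected) (hIX : (I ∩ X).Nonempty)
    (f : ℝ → ℝ) (hf1 : ContDiffOn ℝ 1 f I) (hf2 : ∀ x ∈ I, deriv f x ≠ 0)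
    (hf3 : Topology.IsEmbedding (fun x : I => f x))
    (himg : f '' (X ∩ I) ⊆ X) :
    ∀ x ∈ X ∩ I, ∃ q : ℚ, Real.logb a |deriv f x| = q := by
  rintro x ⟨hxX, hxI⟩
  have h0 := zero_notMem hXinf hXmin
  have hXc : IsCompact X := isCompact_Icc.of_isClosed_subset hXcl hXsub
  have hX1 : X ⊆ Ico 0 1 := by
    intro y hy
    refine ⟨(hXsub hy).1, lt_of_le_of_ne (hXsub hy).2 ?_⟩
    rintro rfl
    exact h0 (by simpa [Ta] using hXinv hy)
  by_contra hrat
  have hirr : Irrational (-Real.logb a |deriv f x|) := by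
    refine Irrational.neg fun ⟨q, hq⟩ => hrat ⟨q, hq.symm⟩
  set θ := fracPart a (deriv f x) with hθ
  have hdense : Dense (range fun n : ℕ => n • θ) := by
    rw [← DenseRange, ← denseRange_zsmul_iff_nsmul, hθ, fracPart,
      AddCircle.denseRange_zsmul_coe_iff, div_one]
    exact hirr
  have hsd : HasStrictDerivAt f (deriv f x) x :=
    (hf1.contDiffAt (hIopen.mem_nhds hxI)).hasStrictDerivAt one_ne_zero
  have hfX : f x ∈ X := himg ⟨x, ⟨hxX, hxI⟩, rfl⟩
  have hstep : ∀ t ∈ clusterScales a X x, t + θ ∈ clusterScales a X x := fun t ht =>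
    clusterScales_subset ha hXinf hXinv hXmin hfX hxX <|
      add_fracPart_mem_clusterScales hsd (hf2 x hxI)
        ((hIopen.eventually_mem hxI).mono fun u hu huX => himg ⟨u, ⟨huX, hu⟩, rfl⟩) ht
  obtain ⟨x₀, hx₀, hacc⟩ := hXinf.exists_accPt_of_subset_isCompact hXc Subset.rfl
  obtain ⟨t₀, ht₀⟩ := clusterScales_nonempty (a := a) hacc hx₀
  have ht := clusterScales_subset ha hXinf hXinv hXmin hx₀ hxX ht₀
  have horb : ∀ n : ℕ, t₀ + n • θ ∈ clusterScales a X x := by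
    intro n
    induction n with
    | zero => simpa using ht
    | succ n ih => rw [succ_nsmul, ← add_assoc]; exact hstep _ ih
  refine clusterScales_ne_univ ha hX1 hXc h0 hXinv hXmin hxX (eq_univ_of_forall fun t => ?_)
  have hcl : IsClosed ((fun s => t₀ + s) ⁻¹' clusterScales a X x) :=
    (isClosed_clusterScales a X x).preimage (continuous_const.add continuous_id)
  have := closure_minimal (t := (fun s => t₀ + s) ⁻¹' clusterScales a X x)
    (range_subset_iff.2 horb) hcl (hdense (t - t₀))
  simpa using this
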